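/- Let n ≡ 3 (mod 4) be a positive integer. Then, modulo Φ_n(q)^2 · Φ_{n^2}(q)^2, the sum over k from 0 to (n^2-1)/2 of (1+q^{4k+1})(q^2;q^4)_k^3 / ((1+q)(q^4;q^4)_k^3) · q^k is congruent to [n^2]_{q^2} · (q^3;q^4)_{(n^2-1)/2} / (q^5;q^4)_{(n^2-1)/2} · q^{(1-n^2)/2}. -/

import Mathlib

open Polynomial Finset

/-- The variable `q` as an element of the field of rational functions `ℚ(q)`. -/
noncomputable def Q : RatFunc ℚ := RatFunc.X

/-- The q-shifted factorial `(a;b)_k = (1-a)(1-ab)⋯(1-ab^{k-1})` in `ℚ(q)`. -/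
noncomputable def qPoch (a b : RatFunc ℚ) (k : ℕ) : RatFunc ℚ :=
  ∏ i ∈ Finset.range k, (1 - a * b ^ i)

/-!
Replace two of the three factors `(q²; q⁴)_k / (q⁴; q⁴)_k` of the summand by their shifts by `x` and
`x⁻¹`. The deformation is even in `log x`, so it alters the sum only to order `(1 - x)²`, and at
`x = q ^ (2N)` it is a terminating very-well-poised `₆φ₅` series whose value is the asserted closed
form. As `Φ_N(q)` divides `1 - q ^ (2N)`, this settles the congruence modulo `Φ_N(q)²` for every
odd `N`.

Modulo `Φ_n(q)²`, where `n ∣ N`, both sides vanish. The closed form contains `Φ_n(q)` twice. The sum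
splits into blocks of length `n` whose second halves vanish term by term; the first half of a block
is, up to a unit, the value of one function `S(y)` at some `y ≡ 1` modulo `Φ_n(q)`. By the case
`N = n`, `S(1) ≡ 0` modulo `Φ_n(q)²`, and reversing the order of summation shows `S(q⁻ⁿ) = 0`. Since
`1 - q⁻ⁿ` contains `Φ_n(q)` exactly once, dividing out this root gives `S(y) ≡ 0` modulo `Φ_n(q)²`
for all such `y`.
-/

section QPochhammer

/-- The q-shifted factorial `(a; p)_k`. The base ring is arbitrary so that `a` may be a polynomial
variable; over `ℚ(q)` this is `qPoch`. -/
def qPochhammer {R : Type*} [CommRing R] (a p : R) (k : ℕ) : R :=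
  ∏ i ∈ range k, (1 - a * p ^ i)

section Ring

variable {R S : Type*} [CommRing R] [CommRing S]

@[simp]
lemma qPochhammer_zero (a p : R) : qPochhammer a p 0 = 1 :=
  prod_range_zero _

lemma qPochhammer_succ (a p : R) (k : ℕ) :
    qPochhammer a p (k + 1) = qPochhammer a p k * (1 - a * p ^ k) :=
  prod_range_succ _ _

lemma qPochhammer_add (a p : R) (k l : ℕ) :
    qPochhammer a p (k + l) = qPochhammer a p k * qPochhammer (a * p ^ k) p l := by
  simp only [qPochhammer, prod_range_add, pow_add, mul_assoc]

lemma qPochhammer_succ' (a p : R) (k : ℕ) :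
    qPochhammer a p (k + 1) = (1 - a) * qPochhammer (a * p) p k := by
  rw [add_comm, qPochhammer_add, qPochhammer_succ, qPochhammer_zero, pow_zero, pow_one, one_mul,
    mul_one]

lemma map_qPochhammer (f : R →+* S) (a p : R) (k : ℕ) :
    f (qPochhammer a p k) = qPochhammer (f a) (f p) k := by
  simp [qPochhammer]

end Ring

variable {K : Type*} [Field K]

lemma qPochhammer_reflect {a p : K} (ha : a ≠ 0) (hp : p ≠ 0) (k : ℕ) :
    qPochhammer a p k = (-a) ^ k * p ^ k.choose 2 * qPochhammer (p / (a * p ^ k)) p k := by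
  have factor : ∀ i ∈ range k,
      1 - a * p ^ i = -a * p ^ i * (1 - p / (a * p ^ k) * p ^ (k - 1 - i)) := by
    intro i hi
    have : p ^ k = p ^ (k - 1 - i) * p ^ i * p := by
      rw [← pow_add, ← pow_succ]; congr 1; grind
    rw [this]
    field_simp
    ring
  rw [qPochhammer, prod_congr rfl factor, prod_mul_distrib, prod_mul_distrib, prod_const,
    card_range, prod_pow_eq_pow_sum, sum_range_id, Nat.choose_two_right,
    prod_range_reflect (fun i => 1 - p / (a * p ^ k) * p ^ i), qPochhammer]

lemma qPochhammer_div_reflect {a b p : K} (ha : a ≠ 0) (hb : b ≠ 0) (hp : p ≠ 0) (k : ℕ) :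
    qPochhammer (p / (a * p ^ k)) p k / qPochhammer (p / (b * p ^ k)) p k =
      (b / a) ^ k * (qPochhammer a p k / qPochhammer b p k) := by
  have hpow : b ^ k / a ^ k = (-b) ^ k / (-a) ^ k := by rw [← div_pow, ← neg_div_neg_eq, div_pow]
  have hchoose := pow_ne_zero (k.choose 2) hp
  rw [qPochhammer_reflect ha hp, qPochhammer_reflect hb hp, div_pow, hpow,
    mul_div_mul_comm, mul_div_mul_right _ _ hchoose, ← mul_assoc, div_mul_div_comm,
    mul_comm ((-b) ^ k), div_self (by simp [ha, hb]), one_mul]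

lemma prod_pow_sub_pow_eq_qPochhammer {p : K} (hp : p ≠ 0) (m k : ℕ) :
    ∏ i ∈ range k, (p ^ m - p ^ i) = (p ^ m) ^ k * qPochhammer (p ^ m)⁻¹ p k := by
  have factor : ∀ i ∈ range k, p ^ m - p ^ i = p ^ m * (1 - (p ^ m)⁻¹ * p ^ i) := fun i _ => by
    field_simp
  rw [prod_congr rfl factor, prod_mul_distrib, prod_const, card_range, qPochhammer]

end QPochhammer

section SixPhiFive

variable {K : Type*} [Field K]

/-- The `k`-th term of the very-well-poised series `₆φ₅` in base `p` with numerator parameters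
`a, b, c, M⁻¹`, normalised by `a * p = b * c * e`. The factor `M ^ k * (M⁻¹; p)_k` is written as
`∏ i < k, (M - p ^ i)`. -/
def sixPhiFiveTerm (p a b c e M : K) (k : ℕ) : K :=
  (1 - a * p ^ (2 * k)) * qPochhammer a p k * qPochhammer b p k * qPochhammer c p k *
      (∏ i ∈ range k, (M - p ^ i)) * e ^ k /
    (qPochhammer p p k * qPochhammer (c * e) p k * qPochhammer (b * e) p k *
      qPochhammer (a * p * M) p k)

variable {p a b c e M : K}

/-- The `L`-th partial sum of the terms in `sum_sixPhiFiveTerm_contiguous`, up to a factor that does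
not depend on `L`. -/
def sixPhiFiveRemainder (p a b c e M : K) (L : ℕ) : K :=
  qPochhammer a p (L + 1) * qPochhammer b p (L + 1) * qPochhammer c p (L + 1) *
      (∏ i ∈ range L, (M - p ^ i)) * e ^ L /
    (qPochhammer p p L * qPochhammer (c * e) p L * qPochhammer (b * e) p L *
      qPochhammer (a * p * M * p) p L)

variable (p a b c e M : K)

lemma sixPhiFiveRemainder_succ (L : ℕ) :
    sixPhiFiveRemainder p a b c e M (L + 1) = sixPhiFiveRemainder p a b c e M L *
      ((1 - a * p * p ^ L) * (1 - b * p * p ^ L) * (1 - c * p * p ^ L) * (M - p ^ L) * e /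
        ((1 - p * p ^ L) * (1 - c * e * p ^ L) * (1 - b * e * p ^ L) *
          (1 - a * p * M * p * p ^ L))) := by
  simp only [sixPhiFiveRemainder, qPochhammer_succ _ _ (L + 1), qPochhammer_succ p p L,
    qPochhammer_succ (c * e) p L, qPochhammer_succ (b * e) p L,
    qPochhammer_succ (a * p * M * p) p L,
    prod_range_succ, pow_succ]
  simp only [div_eq_mul_inv, mul_inv]
  ring

lemma sixPhiFiveTerm_succ (L : ℕ) :
    sixPhiFiveTerm p a b c e M (L + 1) = sixPhiFiveRemainder p a b c e M L *
      ((1 - a * p * p * p ^ L * p ^ L) * (M - p ^ L) * e /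
        ((1 - p * p ^ L) * (1 - c * e * p ^ L) * (1 - b * e * p ^ L) * (1 - a * p * M))) := by
  simp only [sixPhiFiveTerm, sixPhiFiveRemainder, qPochhammer_succ' (a * p * M),
    qPochhammer_succ p p L, qPochhammer_succ (c * e) p L, qPochhammer_succ (b * e) p L,
    prod_range_succ, div_eq_mul_inv, mul_inv]
  ring

lemma sixPhiFiveTerm_mul_succ (L : ℕ) :
    sixPhiFiveTerm p a b c e (M * p) (L + 1) = sixPhiFiveRemainder p a b c e M L *
      ((1 - a * p * p * p ^ L * p ^ L) * (M * p - 1) * p ^ L * e /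
        ((1 - p * p ^ L) * (1 - c * e * p ^ L) * (1 - b * e * p ^ L) *
          (1 - a * p * M * p * p ^ L))) := by
  have shift : ∏ i ∈ range (L + 1), (M * p - p ^ i) =
      (M * p - 1) * p ^ L * ∏ i ∈ range L, (M - p ^ i) := by
    simp_rw [prod_range_succ', pow_succ, ← sub_mul, prod_mul_distrib, prod_const, card_range]
    ring
  simp only [sixPhiFiveTerm, sixPhiFiveRemainder, ← mul_assoc, qPochhammer_succ p p L,
    qPochhammer_succ (c * e) p L, qPochhammer_succ (b * e) p L,
    qPochhammer_succ (a * p * M * p) p L,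
    shift, div_eq_mul_inv, mul_inv]
  ring

variable {p a b c e M}

lemma sum_sixPhiFiveTerm_contiguous (hae : a * p = b * c * e)
    (hp : ∀ k, 1 - p * p ^ k ≠ 0) (hce : ∀ k, 1 - c * e * p ^ k ≠ 0)
    (hbe : ∀ k, 1 - b * e * p ^ k ≠ 0) (haM : ∀ k, 1 - a * p * M * p ^ k ≠ 0)
    (hceM : 1 - c * e * M ≠ 0) (hbeM : 1 - b * e * M ≠ 0) (L : ℕ) :
    ∑ k ∈ range (L + 1), (sixPhiFiveTerm p a b c e (M * p) k -
        (1 - a * p * M) * (1 - e * M) / ((1 - c * e * M) * (1 - b * e * M)) *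
          sixPhiFiveTerm p a b c e M k) =
      e * M / ((1 - c * e * M) * (1 - b * e * M)) * sixPhiFiveRemainder p a b c e M L := by
  induction L with
  | zero =>
    simp only [sixPhiFiveTerm, sixPhiFiveRemainder, qPochhammer_succ, qPochhammer_zero, zero_add,
      sum_range_one, mul_zero, pow_zero, mul_one, prod_range_zero, div_one, one_mul]
    rw [div_mul_eq_mul_div, div_mul_eq_mul_div, sub_eq_iff_eq_add, ← add_div,
      eq_div_iff (mul_ne_zero hceM hbeM)]
    linear_combination M * (1 - a) * (1 - e * M) * hae
  | succ L ih =>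
    have hpL := hp L
    have hceL := hce L
    have hbeL := hbe L
    have haML : 1 - a * p * M * p * p ^ L ≠ 0 := by
      simpa only [pow_succ', mul_assoc] using haM (L + 1)
    have haM0 : 1 - a * p * M ≠ 0 := by simpa only [pow_zero, mul_one] using haM 0
    rw [sum_range_succ, ih, sixPhiFiveTerm_mul_succ, sixPhiFiveTerm_succ, sixPhiFiveRemainder_succ]
    generalize sixPhiFiveRemainder p a b c e M L = R
    rw [hae] at *
    generalize hd₁ : 1 - p * p ^ L = d₁ at *
    generalize hd₂ : 1 - c * e * p ^ L = d₂ at *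
    generalize hd₃ : 1 - b * e * p ^ L = d₃ at *
    generalize hd₄ : 1 - b * c * e * M * p * p ^ L = d₄ at *
    generalize hd₅ : 1 - b * c * e * M = d₅ at *
    generalize hd₆ : 1 - c * e * M = d₆ at *
    generalize hd₇ : 1 - b * e * M = d₇ at *
    field_simp
    subst_vars
    ring

/-- Induction on `m`: the contiguous relation passes from `M` to `M * p`, and at `M = p ^ m` its
right-hand side vanishes from `L = m + 1` on. -/
theorem sum_sixPhiFiveTerm (hae : a * p = b * c * e)
    (hp : ∀ k, 1 - p * p ^ k ≠ 0) (hce : ∀ k, 1 - c * e * p ^ k ≠ 0)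
    (hbe : ∀ k, 1 - b * e * p ^ k ≠ 0) (ha : ∀ k, 1 - a * p * p ^ k ≠ 0) (m : ℕ) :
    ∑ k ∈ range (m + 1), sixPhiFiveTerm p a b c e (p ^ m) k =
      (1 - a) * qPochhammer (a * p) p m * qPochhammer e p m /
        (qPochhammer (c * e) p m * qPochhammer (b * e) p m) := by
  induction m with
  | zero => simp [sixPhiFiveTerm]
  | succ m ih =>
    have hzero : ∏ i ∈ range (m + 1), (p ^ m - p ^ i) = 0 :=
      prod_eq_zero (self_mem_range_succ m) (sub_self _)
    have hlast : sixPhiFiveTerm p a b c e (p ^ m) (m + 1) = 0 := by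
      simp only [sixPhiFiveTerm, hzero, mul_zero, zero_mul, zero_div]
    have hrem : sixPhiFiveRemainder p a b c e (p ^ m) (m + 1) = 0 := by
      simp only [sixPhiFiveRemainder, hzero, mul_zero, zero_mul, zero_div]
    have haM (k : ℕ) : 1 - a * p * p ^ m * p ^ k ≠ 0 := by
      rw [mul_assoc _ (p ^ m), ← pow_add]
      exact ha (m + k)
    have contiguous := sum_sixPhiFiveTerm_contiguous hae hp hce hbe haM (hce m) (hbe m) (m + 1)
    rw [hrem, mul_zero, sum_sub_distrib, sub_eq_zero, ← mul_sum,
      sum_range_succ (sixPhiFiveTerm p a b c e (p ^ m)), hlast, add_zero, ih,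
      ← pow_succ] at contiguous
    rw [contiguous, div_mul_div_comm]
    simp only [qPochhammer_succ]
    congr 1 <;> ring

end SixPhiFive

section DeformedSum

variable {K : Type*} [Field K] {q : K}

/-- The quotient `(q²y; q⁴)_k / (q⁴y; q⁴)_k`; at `y = 1` its cube enters the sum under study. -/
def qRatio (q y : K) (k : ℕ) : K :=
  qPochhammer (q ^ 2 * y) (q ^ 4) k / qPochhammer (q ^ 4 * y) (q ^ 4) k

/-- The `k`-th summand, multiplied by `1 + q` and shifted by `y` in the sense that
`y = q ^ (4 * a)` corresponds to replacing `k` by `k + a`, up to a common factor. -/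
def cubicTerm (q y : K) (k : ℕ) : K :=
  (1 + q ^ (4 * k + 1) * y) * q ^ k * qRatio q y k ^ 3

/-- The `k`-th summand of the deformation in which two of the three factors `qRatio q 1 k` are moved
to `x` and `x⁻¹`. -/
def deformedTerm (q x : K) (k : ℕ) : K :=
  (1 + q ^ (4 * k + 1)) * q ^ k * qRatio q 1 k * (qRatio q x k * qRatio q x⁻¹ k)

/-- The closed form `[2m+1]_{q²} (q³; q⁴)_m / (q⁵; q⁴)_m * q⁻ᵐ`. -/
def closedForm (q : K) (m : ℕ) : K :=
  (∑ i ∈ range (2 * m + 1), q ^ (2 * i)) * qPochhammer (q ^ 3) (q ^ 4) m /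
    qPochhammer (q ^ 5) (q ^ 4) m * (q ^ m)⁻¹

lemma ne_zero_of_injective_pow (hq : Function.Injective (q ^ · : ℕ → K)) : q ≠ 0 := by
  rintro rfl
  exact absurd (@hq 1 2 (by simp)) (by decide)

lemma one_sub_pow_ne_zero (hq : Function.Injective (q ^ · : ℕ → K)) {e : ℕ} (he : e ≠ 0) :
    1 - q ^ e ≠ 0 :=
  sub_ne_zero.2 <| by simpa using hq.ne he.symm

lemma qPochhammer_pow_ne_zero (hq : Function.Injective (q ^ · : ℕ → K)) {s : ℕ} (hs : s ≠ 0)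
    (k : ℕ) : qPochhammer (q ^ s) (q ^ 4) k ≠ 0 :=
  prod_ne_zero_iff.2 fun i _ => by
    rw [← pow_mul, ← pow_add]
    exact one_sub_pow_ne_zero hq (by omega)

lemma sixPhiFiveTerm_eq_deformedTerm (hq : Function.Injective (q ^ · : ℕ → K)) (m k : ℕ) :
    sixPhiFiveTerm (q ^ 4) (q ^ 2) q (q ^ 2 * q ^ (4 * m + 2)) (q ^ 3 / q ^ (4 * m + 2))
        ((q ^ 4) ^ m) k =
      (1 - q) * deformedTerm q (q ^ (4 * m + 2)) k := by
  have hq0 := ne_zero_of_injective_pow hq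
  have hpow : (q ^ 4) ^ m = q ^ (4 * m + 2) / q ^ 2 := by
    rw [← pow_mul, pow_add, mul_div_cancel_right₀ _ (pow_ne_zero 2 hq0)]
  have hx : q ^ (4 * m + 2) ≠ 0 := pow_ne_zero _ hq0
  have shift : qPochhammer q (q ^ 4) k * (1 - q ^ (4 * k + 1)) =
      (1 - q) * qPochhammer (q ^ 5) (q ^ 4) k := by
    rw [pow_succ' q (4 * k), pow_mul, ← qPochhammer_succ, qPochhammer_succ', ← pow_succ']
  have split : 1 - q ^ 2 * (q ^ 4) ^ (2 * k) = (1 - q ^ (4 * k + 1)) * (1 + q ^ (4 * k + 1)) := by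
    ring
  have h5 := qPochhammer_pow_ne_zero hq (by decide : 5 ≠ 0) k
  rw [sixPhiFiveTerm, deformedTerm, prod_pow_sub_pow_eq_qPochhammer (pow_ne_zero 4 hq0), split]
  simp only [qRatio, hpow]
  generalize q ^ (4 * m + 2) = x at *
  rw [show (x / q ^ 2)⁻¹ = q ^ 2 * x⁻¹ by field_simp,
    show q ^ 2 * x * (q ^ 3 / x) = q ^ 5 by field_simp,
    show q * (q ^ 3 / x) = q ^ 4 * x⁻¹ by field_simp,
    show q ^ 2 * q ^ 4 * (x / q ^ 2) = q ^ 4 * x by field_simp, mul_one, mul_one]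
  have hk : (x / q ^ 2) ^ k * (q ^ 3 / x) ^ k = q ^ k := by rw [← mul_pow]; congr 1; field_simp
  calc
    _ = (qPochhammer q (q ^ 4) k * (1 - q ^ (4 * k + 1))) * ((x / q ^ 2) ^ k * (q ^ 3 / x) ^ k) *
        ((1 + q ^ (4 * k + 1)) * qPochhammer (q ^ 2) (q ^ 4) k *
          qPochhammer (q ^ 2 * x) (q ^ 4) k * qPochhammer (q ^ 2 * x⁻¹) (q ^ 4) k) /
        (qPochhammer (q ^ 5) (q ^ 4) k * (qPochhammer (q ^ 4) (q ^ 4) k *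
          qPochhammer (q ^ 4 * x) (q ^ 4) k * qPochhammer (q ^ 4 * x⁻¹) (q ^ 4) k)) := by ring
    _ = _ := by
      rw [shift, hk]
      field_simp

lemma one_sub_sq_mul_sum_pow_two_mul {R : Type*} [CommRing R] (q : R) (k : ℕ) :
    (1 - q ^ 2) * ∑ i ∈ range k, q ^ (2 * i) = 1 - q ^ (2 * k) := by
  simp_rw [pow_mul, mul_neg_geom_sum]

lemma one_sub_sq_mul_qPochhammer (q : K) (m : ℕ) :
    (1 - q ^ 2) * qPochhammer (q ^ 2 * q ^ 4) (q ^ 4) m =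
      (1 - q ^ 2) * ((∑ i ∈ range (2 * m + 1), q ^ (2 * i)) * qPochhammer (q ^ 2) (q ^ 4) m) := by
  have hpow : q ^ (2 * (2 * m + 1)) = q ^ 2 * (q ^ 4) ^ m := by ring
  rw [← qPochhammer_succ', qPochhammer_succ, ← mul_assoc, one_sub_sq_mul_sum_pow_two_mul, hpow,
    mul_comm]

theorem sum_deformedTerm (hq : Function.Injective (q ^ · : ℕ → K)) (m : ℕ) :
    ∑ k ∈ range (m + 1), deformedTerm q (q ^ (4 * m + 2)) k = (1 + q) * closedForm q m := by
  have hq0 := ne_zero_of_injective_pow hq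
  have hq1 : 1 - q ≠ 0 := by simpa using one_sub_pow_ne_zero hq one_ne_zero
  have h2 := qPochhammer_pow_ne_zero hq two_ne_zero m
  have h5 := qPochhammer_pow_ne_zero hq (by decide : 5 ≠ 0) m
  have hqm := pow_ne_zero m hq0
  have hce : q ^ 2 * q ^ (4 * m + 2) * (q ^ 3 / q ^ (4 * m + 2)) = q ^ 5 := by field_simp
  have hbe : q * (q ^ 3 / q ^ (4 * m + 2)) = q ^ 4 / (q ^ 2 * (q ^ 4) ^ m) := by
    field_simp
    ring
  have he : q ^ 3 / q ^ (4 * m + 2) = q ^ 4 / (q ^ 3 * (q ^ 4) ^ m) := by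
    field_simp
    ring
  apply mul_left_cancel₀ hq1
  rw [mul_sum, sum_congr rfl fun k _ => (sixPhiFiveTerm_eq_deformedTerm hq m k).symm,
    sum_sixPhiFiveTerm, one_sub_sq_mul_qPochhammer, hce, hbe, he,
    mul_div_mul_comm _ _ (qPochhammer (q ^ 5) _ _),
    qPochhammer_div_reflect (pow_ne_zero 3 hq0) (pow_ne_zero 2 hq0) (pow_ne_zero 4 hq0)]
  · rw [show q ^ 2 / q ^ 3 = q⁻¹ by field_simp, inv_pow, closedForm]
    generalize ∑ i ∈ range (2 * m + 1), q ^ (2 * i) = S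
    field_simp
    ring
  · field_simp
  · intro k
    rw [← pow_succ', ← pow_mul]
    exact one_sub_pow_ne_zero hq (by omega)
  · intro k
    rw [hce, ← pow_mul, ← pow_add]
    exact one_sub_pow_ne_zero hq (by omega)
  · intro k
    rw [← mul_div_assoc, div_mul_eq_mul_div, ← pow_succ', ← pow_mul, ← pow_add, sub_ne_zero,
      ne_comm, Ne, div_eq_one_iff_eq (pow_ne_zero _ hq0)]
    exact hq.ne (by omega)
  · intro k
    rw [← pow_add, ← pow_mul, ← pow_add]
    exact one_sub_pow_ne_zero hq (by omega)

end DeformedSum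

section Symmetry

variable {K : Type*} [Field K] {q : K}

lemma cubicTerm_add (q y : K) (a r : ℕ) :
    cubicTerm q y (a + r) = q ^ a * qRatio q y a ^ 3 * cubicTerm q (y * q ^ (4 * a)) r := by
  simp only [cubicTerm, qRatio, qPochhammer_add, pow_mul, pow_add, mul_add, mul_assoc]
  ring

lemma qPochhammer_mul_qPochhammer_of_add (hq0 : q ≠ 0) (s t : ℕ) :
    (-q) ^ s * q ^ (2 * s * t) * (qPochhammer (q ^ 2 * (q ^ (2 * (s + t) + 1))⁻¹) (q ^ 4) s *
        qPochhammer (q ^ 4 * (q ^ (2 * (s + t) + 1))⁻¹) (q ^ 4) t) =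
      qPochhammer (q ^ 4 * (q ^ (2 * (s + t) + 1))⁻¹) (q ^ 4) (s + t) := by
  have hchoose : 4 * s.choose 2 + 2 * s = 2 * (s * s) := by
    have := Nat.div_mul_cancel (Nat.even_mul_pred_self s).two_dvd
    rw [← Nat.choose_two_right] at this
    cases s <;> grind
  have hscalar : (-q) ^ s * q ^ (2 * s * t) *
      ((-(q ^ 2 * (q ^ (2 * (s + t) + 1))⁻¹)) ^ s * (q ^ 4) ^ s.choose 2) = 1 := by
    rw [mul_mul_mul_comm, ← mul_pow, neg_mul_neg, ← mul_assoc q, ← pow_succ', ← div_eq_mul_inv,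
      div_pow, div_mul_eq_mul_div]
    simp only [← pow_mul, ← pow_add]
    rw [div_eq_one_iff_eq (pow_ne_zero _ hq0)]
    congr 1
    linear_combination hchoose
  have hbase : q ^ 4 / (q ^ 2 * (q ^ (2 * (s + t) + 1))⁻¹ * (q ^ 4) ^ s) =
      q ^ 4 * (q ^ (2 * (s + t) + 1))⁻¹ * (q ^ 4) ^ t := by
    field_simp
    simp only [← pow_mul, ← pow_add]
    congr 1
    ring
  rw [qPochhammer_reflect (mul_ne_zero (pow_ne_zero _ hq0) (inv_ne_zero (pow_ne_zero _ hq0)))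
    (pow_ne_zero _ hq0), hbase, add_comm s t, qPochhammer_add, add_comm t s, ← mul_assoc,
    ← mul_assoc, hscalar, one_mul, mul_comm]

lemma neg_pow_mul_qRatio_symm (hq : Function.Injective (q ^ · : ℕ → K)) (s t : ℕ) :
    (-q) ^ s * qRatio q (q ^ (2 * (s + t) + 1))⁻¹ s =
      (-q) ^ t * qRatio q (q ^ (2 * (s + t) + 1))⁻¹ t := by
  have hq0 := ne_zero_of_injective_pow hq
  have hden (k : ℕ) : qPochhammer (q ^ 4 * (q ^ (2 * (s + t) + 1))⁻¹) (q ^ 4) k ≠ 0 :=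
    prod_ne_zero_iff.2 fun i _ => by
      rw [sub_ne_zero, ne_comm, mul_right_comm, ← pow_mul, ← pow_add, ← div_eq_mul_inv, Ne,
        div_eq_one_iff_eq (pow_ne_zero _ hq0)]
      exact hq.ne (by omega)
  have hs := qPochhammer_mul_qPochhammer_of_add hq0 s t
  have ht := qPochhammer_mul_qPochhammer_of_add hq0 t s
  rw [add_comm t s] at ht
  rw [qRatio, qRatio, mul_div_assoc', mul_div_assoc', div_eq_div_iff (hden s) (hden t)]
  apply mul_left_cancel₀ (pow_ne_zero (2 * s * t) hq0)
  linear_combination hs - ht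

lemma cubicTerm_antisymm (hq : Function.Injective (q ^ · : ℕ → K)) {s t : ℕ} (hst : Odd (s + t)) :
    cubicTerm q (q ^ (2 * (s + t) + 1))⁻¹ s = -cubicTerm q (q ^ (2 * (s + t) + 1))⁻¹ t := by
  have hq0 := ne_zero_of_injective_pow hq
  have symm := neg_pow_mul_qRatio_symm hq s t
  have hfactor (s t : ℕ) : cubicTerm q (q ^ (2 * (s + t) + 1))⁻¹ s = (-1) ^ s *
      ((q ^ (2 * s))⁻¹ + (q ^ (2 * t))⁻¹) *
      ((-q) ^ s * qRatio q (q ^ (2 * (s + t) + 1))⁻¹ s) ^ 3 := by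
    have hsq : ((-1) ^ s) ^ 4 = (1 : K) := by
      rw [← pow_mul', Even.neg_one_pow ((by decide : Even 4).mul_right s)]
    have hy : q ^ (4 * s + 1) * (q ^ (2 * (s + t) + 1))⁻¹ = q ^ (2 * s) * (q ^ (2 * t))⁻¹ := by
      field_simp
      ring
    rw [cubicTerm, hy, neg_pow q, mul_pow ((-1) ^ s * q ^ s), mul_pow ((-1) ^ s)]
    field_simp
    rw [hsq]
    ring
  have hsign : (-1) ^ s = -(-1 : K) ^ t := by
    have hmul := hst.neg_one_pow (α := K)
    rw [pow_add] at hmul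
    rcases neg_one_pow_eq_or K t with h | h <;> grind
  rw [hfactor s t, symm, hsign, add_comm s t, hfactor t s]
  ring

lemma sum_cubicTerm_inv_eq_zero (hq : Function.Injective (q ^ · : ℕ → K)) {M : ℕ} (hM : Odd M) :
    ∑ r ∈ range (M + 1), cubicTerm q (q ^ (2 * M + 1))⁻¹ r = 0 := by
  apply sum_involution fun s _ => M - s
  · intro s hs
    obtain ⟨t, rfl⟩ := Nat.exists_eq_add_of_le (mem_range_succ_iff.1 hs)
    rw [cubicTerm_antisymm hq hM, Nat.add_sub_cancel_left, neg_add_cancel]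
  · intro s hs _
    grind
  · grind
  · grind

end Symmetry

section Valuation

variable {K Γ₀ : Type*} [Field K] [LinearOrderedCommGroupWithZero Γ₀] {v : Valuation K Γ₀}

lemma map_prod_sub_prod_le {ι : Type*} {s : Finset ι} {f g : ι → K} {ε : Γ₀}
    (hf : ∀ i ∈ s, v (f i) ≤ 1) (hg : ∀ i ∈ s, v (g i) ≤ 1)
    (hfg : ∀ i ∈ s, v (f i - g i) ≤ ε) : v (∏ i ∈ s, f i - ∏ i ∈ s, g i) ≤ ε := by
  induction s using Finset.cons_induction with
  | empty => simp
  | cons a s ha ih =>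
    simp only [forall_mem_cons] at hf hg hfg
    have hprod : v (∏ i ∈ s, g i) ≤ 1 := by
      rw [map_prod]
      exact prod_le_one' hg.2
    have split : f a * ∏ i ∈ s, f i - g a * ∏ i ∈ s, g i =
        f a * (∏ i ∈ s, f i - ∏ i ∈ s, g i) + (f a - g a) * ∏ i ∈ s, g i := by ring
    rw [prod_cons, prod_cons, split]
    refine v.map_add_le ?_ ?_
    · rw [map_mul]
      exact mul_le_of_le_one_of_le hf.1 (ih hf.2 hg.2 hfg.2)
    · rw [map_mul]
      exact mul_le_of_le_of_le_one hfg.1 hprod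

lemma map_div_sub_div_le {a b c d : K} {ε : Γ₀} (hb : v b = 1) (hc : v c ≤ 1) (hd : v d = 1)
    (hac : v (a - c) ≤ ε) (hbd : v (b - d) ≤ ε) : v (a / b - c / d) ≤ ε := by
  have hb0 : b ≠ 0 := v.ne_zero_iff.1 (by simp [hb])
  have hd0 : d ≠ 0 := v.ne_zero_iff.1 (by simp [hd])
  have split : a / b - c / d = ((a - c) * d - c * (b - d)) / (b * d) := by
    field_simp
    ring
  rw [split, map_div₀, map_mul v b, hb, hd, one_mul, div_one]
  refine v.map_sub_le ?_ ?_
  · rwa [map_mul, hd, mul_one]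
  · rw [map_mul]
    exact mul_le_of_le_one_of_le hc hbd

lemma map_one_sub_le_one {a : K} (ha : v a ≤ 1) : v (1 - a) ≤ 1 :=
  v.map_sub_le v.map_one.le ha

lemma map_qPochhammer_le_one {a p : K} (ha : v a ≤ 1) (hp : v p ≤ 1) (k : ℕ) :
    v (qPochhammer a p k) ≤ 1 := by
  rw [qPochhammer, map_prod]
  refine prod_le_one' fun i _ => map_one_sub_le_one ?_
  rw [map_mul, map_pow]
  exact mul_le_one' ha (pow_le_one' hp i)

/-- The product is even in `log x`, so moving `x` away from `1` changes it to second order only. -/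
lemma map_qPochhammer_mul_qPochhammer_inv_sub_sq_le {a p x : K} (ha : v a ≤ 1) (hp : v p ≤ 1)
    (hx : v x = 1) (k : ℕ) :
    v (qPochhammer (a * x) p k * qPochhammer (a * x⁻¹) p k - qPochhammer a p k ^ 2) ≤
      v (1 - x) ^ 2 := by
  have hx0 : x ≠ 0 := v.ne_zero_iff.1 (by simp [hx])
  have hap (i : ℕ) : v (a * p ^ i) ≤ 1 := by
    rw [map_mul, map_pow]
    exact mul_le_one' ha (pow_le_one' hp i)
  simp only [qPochhammer]
  rw [← prod_mul_distrib, ← prod_pow]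
  apply map_prod_sub_prod_le
  · intro i _
    rw [mul_right_comm a, mul_right_comm a, map_mul]
    refine mul_le_one' (map_one_sub_le_one ?_) (map_one_sub_le_one ?_) <;>
    simpa [hx] using hap i
  · intro i _
    rw [map_pow]
    exact pow_le_one' (map_one_sub_le_one (hap i)) 2
  · intro i _
    have even : (1 - a * x * p ^ i) * (1 - a * x⁻¹ * p ^ i) - (1 - a * p ^ i) ^ 2 =
        -(a * p ^ i * x⁻¹) * (1 - x) ^ 2 := by
      field_simp
      ring
    rw [even, map_mul, v.map_neg, map_mul, map_inv₀, hx, inv_one, mul_one, map_pow v (1 - x)]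
    exact mul_le_of_le_one_left' (hap i)

/-- Writing `P = (X - ξ) G`, the bound at `x` forces `v (G x) ≤ c`, hence `v (G y) ≤ c`. -/
lemma map_eval_le_sq_of_isRoot {R : Type*} [CommRing R] {v : Valuation R Γ₀} (hv : ∀ r, v r ≤ 1)
    {P : R[X]} {x y ξ : R} {c : Γ₀} (hc : c ≠ 0) (hroot : P.IsRoot ξ) (hxξ : v (x - ξ) = c)
    (hyx : v (y - x) ≤ c) (hP : v (P.eval x) ≤ c ^ 2) : v (P.eval y) ≤ c ^ 2 := by
  obtain ⟨G, rfl⟩ := dvd_iff_isRoot.2 hroot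
  simp only [eval_mul, eval_sub, eval_X, eval_C, map_mul, hxξ, pow_two] at hP ⊢
  have hGx : v (G.eval x) ≤ c := (mul_le_mul_iff_right₀ (zero_lt_iff.2 hc)).1 hP
  have hGyx : v (G.eval y - G.eval x) ≤ c := by
    obtain ⟨r, hr⟩ := sub_dvd_eval_sub y x G
    rw [hr, map_mul]
    exact mul_le_of_le_of_le_one hyx (hv r)
  have hGy : v (G.eval y) ≤ c := by
    rw [← sub_add_cancel (G.eval y) (G.eval x)]
    exact v.map_add_le hGyx hGx
  have hyξ : v (y - ξ) ≤ c := by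
    rw [← sub_add_sub_cancel y x ξ]
    exact v.map_add_le hyx hxξ.le
  exact mul_le_mul' hyξ hGy

end Valuation

section ClearedBlock

/-- The sum `∑ r ≤ M, cubicTerm q y r` multiplied by `(q⁴y; q⁴)_M ^ 3`. It has no denominators, so
`y` may be a polynomial variable. -/
def clearedBlock {R : Type*} [CommRing R] (q y : R) (M : ℕ) : R :=
  ∑ r ∈ range (M + 1), (1 + q ^ (4 * r + 1) * y) * q ^ r *
    (qPochhammer (q ^ 2 * y) (q ^ 4) r *
      qPochhammer (q ^ 4 * y * (q ^ 4) ^ r) (q ^ 4) (M - r)) ^ 3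

lemma map_clearedBlock {R S : Type*} [CommRing R] [CommRing S] (f : R →+* S) (q y : R) (M : ℕ) :
    f (clearedBlock q y M) = clearedBlock (f q) (f y) M := by
  simp [clearedBlock, map_qPochhammer]

lemma clearedBlock_eq {K : Type*} [Field K] {q y : K} {M : ℕ}
    (hden : qPochhammer (q ^ 4 * y) (q ^ 4) M ≠ 0) :
    clearedBlock q y M =
      qPochhammer (q ^ 4 * y) (q ^ 4) M ^ 3 * ∑ r ∈ range (M + 1), cubicTerm q y r := by
  rw [clearedBlock, mul_sum]
  refine sum_congr rfl fun r hr => ?_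
  obtain ⟨t, rfl⟩ := Nat.exists_eq_add_of_le (mem_range_succ_iff.1 hr)
  rw [qPochhammer_add] at hden ⊢
  have hden_r := left_ne_zero_of_mul hden
  rw [Nat.add_sub_cancel_left, cubicTerm, qRatio]
  generalize qPochhammer (q ^ 4 * y) (q ^ 4) r = D at *
  field_simp

end ClearedBlock

section IsCyclotomicAt

lemma count_dvd_add_four_mul {n s i₀ : ℕ} (hn : Odd n) (hs : n ∣ s + 4 * i₀) (hi₀ : i₀ < n)
    (k : ℕ) :
    Nat.count (fun i => n ∣ s + 4 * i) k = k / n + if i₀ < k % n then 1 else 0 := by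
  have hcop : n.Coprime 4 := (Nat.coprime_two_right.2 hn).pow_right 2
  have hiff (i : ℕ) : n ∣ s + 4 * i ↔ i ≡ i₀ [MOD n] := by
    rw [← Nat.modEq_zero_iff_dvd] at hs ⊢
    refine ⟨fun h => ?_, fun h => ((h.mul_left 4).add_left s).trans hs⟩
    exact Nat.ModEq.cancel_left_of_coprime hcop (Nat.ModEq.add_left_cancel' s (h.trans hs.symm))
  simp only [hiff]
  rw [Nat.count_modEq_card _ (by omega), Nat.mod_eq_of_lt hi₀]

lemma mod_eq_div_two_of_dvd {n m : ℕ} (h : n ∣ 2 * m + 1) : m % n = n / 2 := by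
  obtain ⟨t, ht⟩ := h
  obtain ⟨hn, j, rfl⟩ := Nat.odd_mul.1 (ht ▸ odd_two_mul_add_one m)
  obtain ⟨M, rfl⟩ := hn
  have hm : m = (2 * M + 1) * j + M := by linarith
  rw [hm, Nat.mul_add_mod, Nat.mod_eq_of_lt (by omega)]
  omega

variable {K Γ₀ : Type*} [Field K] [LinearOrderedCommGroupWithZero Γ₀]

/-- The valuation `v` behaves on powers of `q` like the `Φ_n(q)`-adic valuation of `ℚ(q)`, where `c`
is the value of `Φ_n(q)`. A congruence modulo `Φ_n(q) ^ 2` then reads `v x ≤ c ^ 2`. -/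
structure IsCyclotomicAt (v : Valuation K Γ₀) (q : K) (n : ℕ) (c : Γ₀) : Prop where
  pos : 0 < n
  ne_zero : c ≠ 0
  lt_one : c < 1
  map_one_sub_pow : ∀ e ≠ 0, v (1 - q ^ e) = if n ∣ e then c else 1

namespace IsCyclotomicAt

variable {v : Valuation K Γ₀} {q y : K} {c : Γ₀} {n g m M : ℕ}

lemma map_one_sub_pow_of_dvd (H : IsCyclotomicAt v q n c) {e : ℕ} (he : e ≠ 0) (hne : n ∣ e) :
    v (1 - q ^ e) = c := by
  rw [H.map_one_sub_pow e he, if_pos hne]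

lemma map_one_sub_pow_of_not_dvd (H : IsCyclotomicAt v q n c) {e : ℕ} (hne : ¬n ∣ e) :
    v (1 - q ^ e) = 1 := by
  rw [H.map_one_sub_pow e (by rintro rfl; exact hne (dvd_zero n)), if_neg hne]

lemma map_self (H : IsCyclotomicAt v q n c) : v q = 1 := by
  have hlt : v (q ^ n - 1) < v 1 := by
    rw [v.map_sub_swap, H.map_one_sub_pow_of_dvd H.pos.ne' dvd_rfl, map_one]
    exact H.lt_one
  have hpow := v.map_eq_of_sub_lt hlt
  rw [map_pow, map_one] at hpow
  exact (pow_eq_one_iff_of_nonneg zero_le H.pos.ne').1 hpow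

lemma map_pow_self (H : IsCyclotomicAt v q n c) (k : ℕ) : v (q ^ k) = 1 := by
  rw [map_pow, H.map_self, one_pow]

lemma injective_pow (H : IsCyclotomicAt v q n c) : Function.Injective (q ^ · : ℕ → K) := by
  have hq0 : q ≠ 0 := v.ne_zero_iff.1 (by simp [H.map_self])
  have hne (a e : ℕ) (he : e ≠ 0) : q ^ a ≠ q ^ (a + e) := fun h => by
    have hone : 1 - q ^ e = 0 := by
      rw [sub_eq_zero]
      exact mul_left_cancel₀ (pow_ne_zero a hq0) (by rw [mul_one, ← pow_add, h])
    have hv := H.map_one_sub_pow e he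
    rw [hone, map_zero] at hv
    split_ifs at hv
    exacts [H.ne_zero hv.symm, zero_ne_one hv]
  intro a b hab
  rcases lt_trichotomy a b with h | h | h
  · obtain ⟨e, rfl⟩ := Nat.exists_eq_add_of_le h.le
    exact absurd hab (hne a e (by omega))
  · exact h
  · obtain ⟨e, rfl⟩ := Nat.exists_eq_add_of_le h.le
    exact absurd hab.symm (hne b e (by omega))

lemma map_one_add_le_one (H : IsCyclotomicAt v q n c) : v (1 + q) ≤ 1 :=
  v.map_add_le v.map_one.le H.map_self.le

lemma map_one_add (H : IsCyclotomicAt v q n c) (hn : ¬n ∣ 2) : v (1 + q) = 1 := by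
  have hn1 : ¬n ∣ 1 := fun h => hn (h.trans (one_dvd 2))
  have hmul : v (1 - q ^ 2) = v (1 - q ^ 1) * v (1 + q) := by rw [← map_mul]; congr 1; ring
  rwa [H.map_one_sub_pow_of_not_dvd hn, H.map_one_sub_pow_of_not_dvd hn1, one_mul, eq_comm]
    at hmul

lemma map_qPochhammer_pow (H : IsCyclotomicAt v q n c) {s : ℕ} (hs : s ≠ 0) (k : ℕ) :
    v (qPochhammer (q ^ s) (q ^ 4) k) = c ^ Nat.count (fun i => n ∣ s + 4 * i) k := by
  induction k with
  | zero => simp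
  | succ k ih =>
    rw [qPochhammer_succ, map_mul, ih, ← pow_mul, ← pow_add, H.map_one_sub_pow _ (by omega),
      Nat.count_succ]
    split_ifs <;> simp [pow_succ]

lemma map_qRatio_one (H : IsCyclotomicAt v q (2 * M + 1) c) (k : ℕ) :
    v (qRatio q 1 k) = if M < k % (2 * M + 1) then c else 1 := by
  have hlt : k % (2 * M + 1) ≤ 2 * M := Nat.lt_succ_iff.1 (Nat.mod_lt k (by omega))
  rw [qRatio, mul_one, mul_one, map_div₀, H.map_qPochhammer_pow two_ne_zero,
    H.map_qPochhammer_pow four_ne_zero,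
    count_dvd_add_four_mul (i₀ := M) (by simp) ⟨2, by ring⟩ (by omega),
    count_dvd_add_four_mul (i₀ := 2 * M) (by simp) ⟨4, by ring⟩ (by omega),
    if_neg hlt.not_gt, add_zero, pow_add, mul_div_cancel_left₀ _ (pow_ne_zero _ H.ne_zero)]
  split_ifs <;> simp

lemma map_sum_pow_two_mul (H : IsCyclotomicAt v q n c) (hn : ¬n ∣ 2) (hm : n ∣ 2 * m + 1) :
    v (∑ i ∈ range (2 * m + 1), q ^ (2 * i)) = c := by
  rw [← one_mul (v _), ← H.map_one_sub_pow_of_not_dvd hn, ← map_mul, one_sub_sq_mul_sum_pow_two_mul,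
    H.map_one_sub_pow_of_dvd (by omega) (hm.mul_left 2)]

lemma map_closedForm (H : IsCyclotomicAt v q (4 * g + 3) c) (hm : 4 * g + 3 ∣ 2 * m + 1) :
    v (closedForm q m) = c ^ 2 := by
  have hodd : Odd (4 * g + 3) := ⟨2 * g + 1, by ring⟩
  have hmod : m % (4 * g + 3) = 2 * g + 1 := (mod_eq_div_two_of_dvd hm).trans (by omega)
  rw [closedForm, map_mul, map_div₀, map_mul, map_inv₀, H.map_pow_self,
    H.map_sum_pow_two_mul (fun h => absurd (Nat.le_of_dvd two_pos h) (by omega)) hm,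
    H.map_qPochhammer_pow three_ne_zero, H.map_qPochhammer_pow (by decide),
    count_dvd_add_four_mul (i₀ := g) hodd ⟨1, by ring⟩ (by omega),
    count_dvd_add_four_mul (i₀ := 3 * g + 1) hodd ⟨3, by ring⟩ (by omega), hmod,
    if_pos (by omega), if_neg (by omega), add_zero, inv_one, mul_one, pow_succ, mul_left_comm,
    mul_div_cancel_left₀ _ (pow_ne_zero _ H.ne_zero), pow_two]

lemma map_qRatio_mul_qRatio_inv_sub_le (H : IsCyclotomicAt v q (2 * m + 1) c) {x : K}
    (hx : v (1 - x) = c) {k : ℕ} (hk : k ≤ m) :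
    v (qRatio q x k * qRatio q x⁻¹ k - qRatio q 1 k ^ 2) ≤ c ^ 2 := by
  have hx1 : v x = 1 := by
    rw [← v.map_one]
    exact v.map_eq_of_sub_lt (by rw [v.map_sub_swap, hx, map_one]; exact H.lt_one)
  have hpow (s : ℕ) := (H.map_pow_self s).le
  have hcong (s : ℕ) :=
    hx ▸ map_qPochhammer_mul_qPochhammer_inv_sub_sq_le (hpow s) (hpow 4) hx1 k
  have hden : v (qPochhammer (q ^ 4) (q ^ 4) k ^ 2) = 1 := by
    rw [map_pow, H.map_qPochhammer_pow four_ne_zero,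
      count_dvd_add_four_mul (i₀ := 2 * m) (by simp) ⟨4, by ring⟩ (by omega),
      Nat.div_eq_of_lt (by omega), Nat.mod_eq_of_lt (by omega), if_neg (by omega)]
    simp
  rw [qRatio, qRatio, qRatio, mul_one, mul_one, div_mul_div_comm, div_pow]
  refine map_div_sub_div_le ?_ ?_ hden (hcong 2) (hcong 4)
  · rw [← hden]
    refine v.map_eq_of_sub_lt ((hcong 4).trans_lt ?_)
    rw [hden]
    exact pow_lt_one' H.lt_one two_ne_zero
  · rw [map_pow]
    exact pow_le_one' (map_qPochhammer_le_one (hpow 2) (hpow 4) k) 2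

theorem map_sum_cubicTerm_sub_closedForm_le (H : IsCyclotomicAt v q (2 * m + 1) c) :
    v (∑ k ∈ range (m + 1), cubicTerm q 1 k - (1 + q) * closedForm q m) ≤ c ^ 2 := by
  have hx : v (1 - q ^ (4 * m + 2)) = c := H.map_one_sub_pow_of_dvd (by omega) ⟨2, by ring⟩
  rw [← sum_deformedTerm H.injective_pow, ← sum_sub_distrib]
  refine v.map_sum_le fun k hk => ?_
  have hkm : k ≤ m := mem_range_succ_iff.1 hk
  have split : cubicTerm q 1 k - deformedTerm q (q ^ (4 * m + 2)) k =
      -((1 + q ^ (4 * k + 1)) * q ^ k * qRatio q 1 k) *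
        (qRatio q (q ^ (4 * m + 2)) k * qRatio q (q ^ (4 * m + 2))⁻¹ k - qRatio q 1 k ^ 2) := by
    rw [cubicTerm, deformedTerm]
    ring
  have hratio : v (qRatio q 1 k) = 1 := by
    rw [H.map_qRatio_one, Nat.mod_eq_of_lt (by omega), if_neg hkm.not_gt]
  rw [split, map_mul, v.map_neg, map_mul, map_mul, hratio, H.map_pow_self, mul_one, mul_one]
  exact mul_le_of_le_one_of_le (v.map_add_le v.map_one.le (H.map_pow_self _).le)
    (H.map_qRatio_mul_qRatio_inv_sub_le hx hkm)

lemma map_sum_cubicTerm_one_le (H : IsCyclotomicAt v q (4 * g + 3) c) :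
    v (∑ r ∈ range (2 * g + 1 + 1), cubicTerm q 1 r) ≤ c ^ 2 := by
  have hodd : 4 * g + 3 = 2 * (2 * g + 1) + 1 := by ring
  have hclosed := H.map_closedForm (m := 2 * g + 1) ⟨1, by ring⟩
  rw [← sub_add_cancel (∑ r ∈ _, _) ((1 + q) * closedForm q (2 * g + 1))]
  refine v.map_add_le (map_sum_cubicTerm_sub_closedForm_le (hodd ▸ H)) ?_
  rw [map_mul, hclosed]
  exact mul_le_of_le_one_left' H.map_one_add_le_one

lemma map_qPochhammer_pow_four_mul (H : IsCyclotomicAt v q (2 * M + 1) c) (hy : v (y - 1) ≤ c) :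
    v (qPochhammer (q ^ 4 * y) (q ^ 4) M) = 1 := by
  have hcop : (2 * M + 1).Coprime 4 := (Nat.coprime_two_right.2 (by simp)).pow_right 2
  rw [qPochhammer, map_prod]
  refine prod_eq_one fun i hi => ?_
  have hdvd : ¬2 * M + 1 ∣ 4 * (i + 1) := fun h => by
    have := Nat.le_of_dvd i.succ_pos (hcop.dvd_of_dvd_mul_left h)
    grind
  rw [← H.map_one_sub_pow_of_not_dvd hdvd]
  apply v.map_eq_of_sub_lt
  have hsub : 1 - q ^ 4 * y * (q ^ 4) ^ i - (1 - q ^ (4 * (i + 1))) =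
      -(q ^ (4 * (i + 1)) * (y - 1)) := by ring
  rw [hsub, v.map_neg, map_mul, H.map_pow_self, one_mul, H.map_one_sub_pow_of_not_dvd hdvd]
  exact hy.trans_lt H.lt_one

lemma map_clearedBlock_eq (H : IsCyclotomicAt v q (2 * M + 1) c) (hy : v (y - 1) ≤ c) :
    v (clearedBlock q y M) = v (∑ r ∈ range (M + 1), cubicTerm q y r) := by
  have hden := H.map_qPochhammer_pow_four_mul hy
  rw [clearedBlock_eq (v.ne_zero_iff.1 (by simp [hden])), map_mul, map_pow, hden, one_pow, one_mul]

lemma map_one_sub_inv_pow (H : IsCyclotomicAt v q n c) : v (1 - (q ^ n)⁻¹) = c := by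
  have hqn : q ^ n ≠ 0 := v.ne_zero_iff.1 (by simp [H.map_self])
  have split : 1 - (q ^ n)⁻¹ = -((1 - q ^ n) / q ^ n) := by
    field_simp
    ring
  rw [split, v.map_neg, map_div₀, H.map_pow_self, div_one,
    H.map_one_sub_pow_of_dvd H.pos.ne' dvd_rfl]

lemma clearedBlock_inv_eq_zero (H : IsCyclotomicAt v q (2 * M + 1) c) (hM : Odd M) :
    clearedBlock q (q ^ (2 * M + 1))⁻¹ M = 0 := by
  have hy : v ((q ^ (2 * M + 1))⁻¹ - 1) ≤ c := by rw [v.map_sub_swap, H.map_one_sub_inv_pow]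
  rw [← v.zero_iff, H.map_clearedBlock_eq hy, sum_cubicTerm_inv_eq_zero H.injective_pow hM,
    map_zero]

/-- The root `y = q⁻ⁿ` is exactly one factor of `Φ_n(q)` away from `y = 1`, where the block is known
to vanish to second order. -/
theorem map_sum_cubicTerm_le (H : IsCyclotomicAt v q (4 * g + 3) c) (hy : v (y - 1) ≤ c) :
    v (∑ r ∈ range (2 * g + 1 + 1), cubicTerm q y r) ≤ c ^ 2 := by
  have hn : 4 * g + 3 = 2 * (2 * g + 1) + 1 := by ring
  have H' := hn ▸ H
  have hroot := H'.clearedBlock_inv_eq_zero ⟨g, rfl⟩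
  have hone := H.map_sum_cubicTerm_one_le
  rw [← H'.map_clearedBlock_eq (by simp)] at hone
  rw [← H'.map_clearedBlock_eq hy]
  have hy1 : v y ≤ 1 := by
    rw [← sub_add_cancel y 1]
    exact v.map_add_le (hy.trans H.lt_one.le) v.map_one.le
  let q' : v.integer := ⟨q, H.map_self.le⟩
  let y' : v.integer := ⟨y, hy1⟩
  let ξ' : v.integer := ⟨(q ^ (2 * (2 * g + 1) + 1))⁻¹, by
    rw [v.mem_integer_iff, map_inv₀, H.map_pow_self, inv_one]⟩
  have heval (z : v.integer) :
      v.integer.subtype ((clearedBlock (C q') X (2 * g + 1)).eval z) =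
        clearedBlock q z (2 * g + 1) := by
    rw [← coe_evalRingHom, map_clearedBlock, map_clearedBlock]
    simp [q']
  have hmap := map_eval_le_sq_of_isRoot (v := v.comap v.integer.subtype) (fun r => r.2)
    (P := clearedBlock (C q') X (2 * g + 1)) (x := 1) (y := y') (ξ := ξ') H.ne_zero
    (Subtype.ext ((heval ξ').trans hroot)) H'.map_one_sub_inv_pow hy
  simp only [Valuation.comap_apply, heval] at hmap
  exact hmap hone

lemma map_qRatio_one_le_one (H : IsCyclotomicAt v q (2 * M + 1) c) (k : ℕ) :
    v (qRatio q 1 k) ≤ 1 := by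
  rw [H.map_qRatio_one]
  split_ifs
  exacts [H.lt_one.le, le_rfl]

lemma map_cubicTerm_le (H : IsCyclotomicAt v q (2 * M + 1) c) {k : ℕ}
    (hk : M < k % (2 * M + 1)) : v (cubicTerm q 1 k) ≤ c ^ 2 := by
  rw [cubicTerm, mul_one, map_mul, map_mul, map_pow v (qRatio q 1 k), H.map_qRatio_one, if_pos hk,
    H.map_pow_self, mul_one, pow_succ' c]
  exact mul_le_of_le_one_of_le (v.map_add_le v.map_one.le (H.map_pow_self _).le)
    (mul_le_of_le_one_left' H.lt_one.le)

lemma map_sum_cubicTerm_block_le (H : IsCyclotomicAt v q (4 * g + 3) c) (j : ℕ) :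
    v (∑ r ∈ range (2 * g + 1 + 1), cubicTerm q 1 ((4 * g + 3) * j + r)) ≤ c ^ 2 := by
  have hn : 4 * g + 3 = 2 * (2 * g + 1) + 1 := by ring
  have hy : v (1 * q ^ (4 * ((4 * g + 3) * j)) - 1) ≤ c := by
    rcases eq_or_ne j 0 with rfl | hj
    · simp
    · rw [one_mul, v.map_sub_swap, H.map_one_sub_pow_of_dvd (by positivity) ⟨4 * j, by ring⟩]
  simp only [cubicTerm_add, ← mul_sum]
  rw [map_mul, map_mul, H.map_pow_self, one_mul, map_pow]
  exact mul_le_of_le_one_of_le (pow_le_one' ((hn ▸ H).map_qRatio_one_le_one _) 3)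
    (H.map_sum_cubicTerm_le hy)

theorem map_sum_cubicTerm_blocks_le (H : IsCyclotomicAt v q (4 * g + 3) c) (j : ℕ) :
    v (∑ k ∈ range ((4 * g + 3) * j + (2 * g + 1) + 1), cubicTerm q 1 k) ≤ c ^ 2 := by
  have hn : 4 * g + 3 = 2 * (2 * g + 1) + 1 := by ring
  have hfull : v (∑ k ∈ range ((4 * g + 3) * j), cubicTerm q 1 k) ≤ c ^ 2 := by
    induction j with
    | zero => simp
    | succ j ih =>
      have hlen : (4 * g + 3) * (j + 1) = (4 * g + 3) * j + ((2 * g + 1 + 1) + (2 * g + 1)) := by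
        ring
      rw [hlen, sum_range_add, sum_range_add]
      refine v.map_add_le ih (v.map_add_le (H.map_sum_cubicTerm_block_le j) ?_)
      refine v.map_sum_le fun r hr => (hn ▸ H).map_cubicTerm_le ?_
      rw [← hn, Nat.mul_add_mod, Nat.mod_eq_of_lt] <;> grind
  rw [add_assoc, sum_range_add]
  exact v.map_add_le hfull (H.map_sum_cubicTerm_block_le j)

theorem map_sum_cubicTerm_sub_closedForm_le_of_dvd (H : IsCyclotomicAt v q (4 * g + 3) c)
    (hm : 4 * g + 3 ∣ 2 * m + 1) :
    v (∑ k ∈ range (m + 1), cubicTerm q 1 k - (1 + q) * closedForm q m) ≤ c ^ 2 := by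
  have hmod : m % (4 * g + 3) = 2 * g + 1 := (mod_eq_div_two_of_dvd hm).trans (by omega)
  refine v.map_sub_le ?_ ?_
  · rw [← Nat.div_add_mod m (4 * g + 3), hmod]
    exact H.map_sum_cubicTerm_blocks_le _
  · rw [map_mul, H.map_closedForm hm]
    exact mul_le_of_le_one_left' H.map_one_add_le_one

end IsCyclotomicAt

end IsCyclotomicAt

section PrimeValuation

open IsDedekindDomain WithZero

variable {F : Type*} [Field F] {P P' : F[X]} (hP : Prime P)

/-- The `P`-adic valuation of `F(X)` for a prime polynomial `P`, with value `exp (-1)` at `P`. -/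
noncomputable def primeValuation : Valuation (RatFunc F) ℤᵐ⁰ :=
  (HeightOneSpectrum.ofPrime ((Ideal.prime_span_singleton_iff).2 hP)).valuation (RatFunc F)

lemma primeValuation_algebraMap_self :
    primeValuation hP (algebraMap F[X] (RatFunc F) P) = exp (-1) := by
  rw [primeValuation, HeightOneSpectrum.valuation_of_algebraMap]
  exact HeightOneSpectrum.intValuation_singleton _ hP.ne_zero rfl

lemma primeValuation_algebraMap_eq_one_iff {a : F[X]} :
    primeValuation hP (algebraMap F[X] (RatFunc F) a) = 1 ↔ ¬P ∣ a := by
  rw [primeValuation, HeightOneSpectrum.valuation_eq_one_iff_notMem, ← Ideal.mem_span_singleton]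
  rfl

lemma primeValuation_algebraMap_le_pow_iff {a : F[X]} {k : ℕ} :
    primeValuation hP (algebraMap F[X] (RatFunc F) a) ≤ exp (-1) ^ k ↔ P ^ k ∣ a := by
  rw [primeValuation, HeightOneSpectrum.valuation_of_algebraMap, ← exp_nsmul, nsmul_eq_mul,
    mul_neg_one, HeightOneSpectrum.intValuation_le_pow_iff_mem, ← Ideal.mem_span_singleton,
    ← Ideal.span_singleton_pow]
  rfl

lemma primeValuation_num_le {f : RatFunc F} {k : ℕ} (hf : primeValuation hP f ≤ exp (-1) ^ k) :
    primeValuation hP (algebraMap F[X] (RatFunc F) f.num) ≤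
      exp (-1) ^ k * primeValuation hP (algebraMap F[X] (RatFunc F) f.denom) := by
  have hnum : algebraMap F[X] (RatFunc F) f.num = f * algebraMap F[X] (RatFunc F) f.denom := by
    rw [← div_eq_iff (RatFunc.algebraMap_ne_zero f.denom_ne_zero), RatFunc.num_div_denom]
  rw [hnum, map_mul]
  exact mul_le_mul_left hf _

lemma pow_dvd_num_of_primeValuation_le {f : RatFunc F} {k : ℕ}
    (hf : primeValuation hP f ≤ exp (-1) ^ k) : P ^ k ∣ f.num := by
  have hdenom : primeValuation hP (algebraMap F[X] (RatFunc F) f.denom) ≤ 1 :=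
    HeightOneSpectrum.valuation_le_one _ _
  rw [← primeValuation_algebraMap_le_pow_iff hP]
  exact (primeValuation_num_le hP hf).trans (mul_le_of_le_one_right' hdenom)

lemma not_dvd_denom_of_primeValuation_le {f : RatFunc F} {k : ℕ}
    (hf : primeValuation hP f ≤ exp (-1) ^ k) : ¬P ∣ f.denom := by
  intro hdenom
  have hnum : P ^ (k + 1) ∣ f.num := by
    rw [← pow_one P, ← primeValuation_algebraMap_le_pow_iff hP] at hdenom
    rw [← primeValuation_algebraMap_le_pow_iff hP, pow_add]
    exact (primeValuation_num_le hP hf).trans (mul_le_mul_right hdenom _)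
  exact hP.not_isUnit ((RatFunc.isCoprime_num_denom f).isUnit_of_dvd'
    ((dvd_pow_self P k.succ_ne_zero).trans hnum) hdenom)

theorem exists_mul_algebraMap_eq_of_primeValuation_le {hP : Prime P} {hP' : Prime P'}
    (hcop : IsCoprime P P') {f : RatFunc F} {k : ℕ} (hf : primeValuation hP f ≤ exp (-1) ^ k)
    (hf' : primeValuation hP' f ≤ exp (-1) ^ k) :
    ∃ a b : F[X], ¬P ∣ b ∧ ¬P' ∣ b ∧
      f * algebraMap F[X] (RatFunc F) b = algebraMap F[X] (RatFunc F) (P ^ k * P' ^ k * a) := by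
  obtain ⟨a, ha⟩ := hcop.pow.mul_dvd (pow_dvd_num_of_primeValuation_le hP hf)
    (pow_dvd_num_of_primeValuation_le hP' hf')
  refine ⟨a, f.denom, not_dvd_denom_of_primeValuation_le hP hf,
    not_dvd_denom_of_primeValuation_le hP' hf', ?_⟩
  rw [← ha, ← eq_div_iff (RatFunc.algebraMap_ne_zero f.denom_ne_zero), RatFunc.num_div_denom]

end PrimeValuation

section RationalFunctions

open WithZero

lemma prime_cyclotomic_rat {n : ℕ} (hn : 0 < n) : Prime (cyclotomic n ℚ) :=
  (cyclotomic.irreducible_rat hn).prime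

lemma primeValuation_cyclotomic {n : ℕ} (hn : 0 < n) (d : ℕ) :
    primeValuation (prime_cyclotomic_rat hn) (algebraMap ℚ[X] (RatFunc ℚ) (cyclotomic d ℚ)) =
      if n = d then exp (-1) else 1 := by
  split_ifs with hnd
  · subst hnd
    exact primeValuation_algebraMap_self _
  · refine (primeValuation_algebraMap_eq_one_iff _).2 fun hdvd => ?_
    exact (prime_cyclotomic_rat hn).not_isUnit
      ((cyclotomic.isCoprime_rat hnd).isUnit_of_dvd' dvd_rfl hdvd)

lemma isCyclotomicAt_primeValuation {n : ℕ} (hn : 0 < n) :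
    IsCyclotomicAt (primeValuation (prime_cyclotomic_rat hn)) Q n (exp (-1)) where
  pos := hn
  ne_zero := exp_ne_zero
  lt_one := by decide
  map_one_sub_pow e he := by
    have hQ : Q ^ e - 1 = algebraMap ℚ[X] (RatFunc ℚ) (X ^ e - 1) := by simp [Q]
    rw [Valuation.map_sub_swap, hQ, ← prod_cyclotomic_eq_X_pow_sub_one (Nat.pos_of_ne_zero he),
      map_prod, map_prod, prod_congr rfl fun d _ => primeValuation_cyclotomic hn d, prod_ite_eq]
    simp [he]

lemma sum_qPoch_sub_eq (m : ℕ) :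
    ∑ k ∈ range (m + 1), (1 + Q ^ (4 * k + 1)) * qPoch (Q ^ 2) (Q ^ 4) k ^ 3 * Q ^ k /
        ((1 + Q) * qPoch (Q ^ 4) (Q ^ 4) k ^ 3) -
      (∑ i ∈ range (2 * m + 1), Q ^ (2 * i)) * qPoch (Q ^ 3) (Q ^ 4) m /
        qPoch (Q ^ 5) (Q ^ 4) m * (Q ^ m)⁻¹ =
      (∑ k ∈ range (m + 1), cubicTerm Q 1 k - (1 + Q) * closedForm Q m) / (1 + Q) := by
  have hQ : 1 + Q ≠ 0 := by
    have hv := (isCyclotomicAt_primeValuation three_pos).map_one_add (by decide)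
    exact (Valuation.ne_zero_iff _).1 (hv.trans_ne one_ne_zero)
  rw [sub_div, mul_div_cancel_left₀ _ hQ, sum_div]
  congr 1
  refine sum_congr rfl fun k _ => ?_
  rw [cubicTerm, qRatio, mul_one, mul_one, mul_one, div_pow, mul_div_assoc', div_div,
    mul_comm (1 + Q), mul_right_comm]
  rfl

end RationalFunctions

theorem stmt5_general (n N : ℕ) (h : n % 4 = 3) (hN : Odd N) (hdvd : n ∣ N) (hne : n ≠ N) :
    ∃ a b : ℚ[X], ¬cyclotomic n ℚ ∣ b ∧ ¬cyclotomic N ℚ ∣ b ∧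
      ((∑ k ∈ range ((N - 1) / 2 + 1), (1 + Q ^ (4 * k + 1)) * qPoch (Q ^ 2) (Q ^ 4) k ^ 3 * Q ^ k /
          ((1 + Q) * qPoch (Q ^ 4) (Q ^ 4) k ^ 3)) -
        (∑ i ∈ range N, Q ^ (2 * i)) * qPoch (Q ^ 3) (Q ^ 4) ((N - 1) / 2) /
          qPoch (Q ^ 5) (Q ^ 4) ((N - 1) / 2) * (Q ^ ((N - 1) / 2))⁻¹) *
        algebraMap ℚ[X] (RatFunc ℚ) b =
      algebraMap ℚ[X] (RatFunc ℚ) (cyclotomic n ℚ ^ 2 * cyclotomic N ℚ ^ 2 * a) := by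
  obtain ⟨g, rfl⟩ : ∃ g, n = 4 * g + 3 := ⟨n / 4, by omega⟩
  obtain ⟨m, rfl⟩ := hN
  have hle : 4 * g + 3 ≤ 2 * m + 1 := Nat.le_of_dvd (by omega) hdvd
  have hn_at := isCyclotomicAt_primeValuation (Nat.succ_pos (4 * g + 2))
  have hN_at := isCyclotomicAt_primeValuation (Nat.succ_pos (2 * m))
  rw [show (2 * m + 1 - 1) / 2 = m by omega, sum_qPoch_sub_eq]
  apply exists_mul_algebraMap_eq_of_primeValuation_le (cyclotomic.isCoprime_rat hne)
  · rw [map_div₀, hn_at.map_one_add (Nat.not_dvd_of_pos_of_lt two_pos (by omega)), div_one]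
    exact hn_at.map_sum_cubicTerm_sub_closedForm_le_of_dvd hdvd
  · rw [map_div₀, hN_at.map_one_add (Nat.not_dvd_of_pos_of_lt two_pos (by omega)), div_one]
    exact hN_at.map_sum_cubicTerm_sub_closedForm_le

/-- For `n ≡ 3 (mod 4)` positive, modulo `Φ_n(q)^2 Φ_{n^2}(q)^2`:
`∑_{k=0}^{(n^2-1)/2} (1+q^{4k+1})(q^2;q^4)_k^3 q^k / ((1+q)(q^4;q^4)_k^3)
 ≡ [n^2]_{q^2} (q^3;q^4)_{(n^2-1)/2} / (q^5;q^4)_{(n^2-1)/2} · q^{(1-n^2)/2}`. -/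
theorem stmt5 (n : ℕ) (hn : 0 < n) (h : n % 4 = 3) :
    ∃ a b : Polynomial ℚ, ¬ (Polynomial.cyclotomic n ℚ ∣ b) ∧
      ¬ (Polynomial.cyclotomic (n ^ 2) ℚ ∣ b) ∧
      ((∑ k ∈ Finset.range ((n ^ 2 - 1) / 2 + 1),
          (1 + Q ^ (4 * k + 1)) * qPoch (Q ^ 2) (Q ^ 4) k ^ 3 * Q ^ k /
            ((1 + Q) * qPoch (Q ^ 4) (Q ^ 4) k ^ 3))
        - (∑ i ∈ Finset.range (n ^ 2), Q ^ (2 * i))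
            * qPoch (Q ^ 3) (Q ^ 4) ((n ^ 2 - 1) / 2)
            / qPoch (Q ^ 5) (Q ^ 4) ((n ^ 2 - 1) / 2)
            * (Q ^ ((n ^ 2 - 1) / 2))⁻¹)
        * algebraMap (Polynomial ℚ) (RatFunc ℚ) b
      = algebraMap (Polynomial ℚ) (RatFunc ℚ)
          (Polynomial.cyclotomic n ℚ ^ 2 * Polynomial.cyclotomic (n ^ 2) ℚ ^ 2 * a) := by
  have hodd : Odd n := Nat.odd_iff.2 (by omega)
  exact stmt5_general n (n ^ 2) h hodd.pow (dvd_pow_self n two_ne_zero)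
    (lt_self_pow₀ (by omega) one_lt_two).ne
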